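/- arXiv:1603.08866 — 4 statements merged into one kernel-verified Lean document; each statement's English description precedes it below -/
import Mathlib

section
/- Let π : S₃ → U(2) be an injective (faithful) unitary representation of the symmetric group S₃ on ℂ² (any such representation is the 2-dimensional irreducible representation up to unitary equivalence). Then there is no S₃-equivariant orthonormal basis of the space of 2×2 complex matrices under the conjugation action: there is no family B₁, B₂, B₃, B₄ of 2×2 complex matrices with Tr(B_i† B_j) = δ_{ij} such that for every g ∈ S₃ there exists a permutation σ_g of {1,2,3,4} with π(g) · B_k · π(g)† = B_{σ_g(k)} for all k. -/
/-!
Averaging `π g * B l * (π g)ᴴ` over the group gives a matrix commuting with every `π g`. Faithfulness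
makes the image of `π` non-abelian, so this average is a scalar matrix (`comm_scalar`), and comparing
traces it equals `3 * trace (B l)` times the identity. Pairing it with `B k` counts the `g` with
`σ_g l = k`; call this number `N k l`, so that `N k l = 3 * trace (B l) * conj (trace (B k))`.
Since `N l l ≥ 1`, all traces are nonzero, hence all `N k l` are nonzero, i.e. the permutation action
is transitive. Conjugation preserves the trace, so all the `B k` have the same trace and `N k l` is
independent of `k`. Summing over the four values of `k` yields `4 * N = |S₃| = 6`, which is absurd.
-/

open Matrix

/-- A 2×2 matrix commuting with two matrices that do not commute with each other is scalar. -/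
lemma comm_scalar (M U V : Matrix (Fin 2) (Fin 2) ℂ) (hU : U * M = M * U) (hV : V * M = M * V)
    (hUV : U * V ≠ V * U) : ∃ c : ℂ, M = c • (1 : Matrix (Fin 2) (Fin 2) ℂ) := by
  have key : ∀ X Y : Matrix (Fin 2) (Fin 2) ℂ, X * Y = Y * X ↔
      (X 0 1 * Y 1 0 = X 1 0 * Y 0 1 ∧ X 0 1 * (Y 0 0 - Y 1 1) = (X 0 0 - X 1 1) * Y 0 1 ∧
        X 1 0 * (Y 0 0 - Y 1 1) = (X 0 0 - X 1 1) * Y 1 0) := by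
    intro X Y
    rw [← Matrix.ext_iff]
    simp only [Fin.forall_fin_two, Matrix.mul_apply, Fin.sum_univ_two]
    constructor
    · rintro ⟨⟨h1, h2⟩, h3, h4⟩
      refine ⟨?_, ?_, ?_⟩
      · linear_combination h1
      · linear_combination -h2
      · linear_combination h3
    · rintro ⟨h1, h2, h3⟩
      refine ⟨⟨?_, ?_⟩, ?_, ?_⟩
      · linear_combination h1
      · linear_combination -h2
      · linear_combination h3
      · linear_combination -h1
  rw [key] at hU hV
  rw [Ne, key] at hUV
  obtain ⟨a1, a2, a3⟩ := hU
  obtain ⟨b1, b2, b3⟩ := hV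
  -- The vectors `(X 0 1, X 1 0, X 0 0 - X 1 1)` of `U` and `V` are not parallel, while that of `M`
  -- is parallel to both, hence zero.
  have h : M 0 1 = 0 ∧ M 1 0 = 0 ∧ M 0 0 - M 1 1 = 0 := by
    generalize M 0 0 - M 1 1 = m at *
    generalize U 0 0 - U 1 1 = u at *
    generalize V 0 0 - V 1 1 = v at *
    refine ⟨?_, ?_, ?_⟩ <;> by_contra hm <;> apply hUV <;> refine ⟨?_, ?_, ?_⟩ <;>
      apply mul_left_cancel₀ hm <;> grind
  obtain ⟨h1, h2, h3⟩ := h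
  refine ⟨M 0 0, ?_⟩
  ext i j
  fin_cases i <;> fin_cases j <;> simp [h1, h2]
  linear_combination -h3

/-- There is no S₃-equivariant orthonormal basis of 2×2 matrices under conjugation by
a faithful unitary representation of S₃ on ℂ². -/
theorem stmt_5 (π : Equiv.Perm (Fin 3) →* Matrix.unitaryGroup (Fin 2) ℂ)
    (hinj : Function.Injective π) :
    ¬ ∃ B : Fin 4 → Matrix (Fin 2) (Fin 2) ℂ,
      (∀ i j, Matrix.trace ((B i)ᴴ * B j) = if i = j then (1 : ℂ) else 0) ∧
      (∀ g : Equiv.Perm (Fin 3), ∃ σ : Equiv.Perm (Fin 4), ∀ k,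
        (π g : Matrix (Fin 2) (Fin 2) ℂ) * B k * (π g : Matrix (Fin 2) (Fin 2) ℂ)ᴴ =
          B (σ k)) := by
  rintro ⟨B, hB, hσ⟩
  choose σ hσ using hσ
  have hleft : ∀ g, (π g : Matrix (Fin 2) (Fin 2) ℂ)ᴴ * (π g : Matrix (Fin 2) (Fin 2) ℂ) = 1 :=
    fun g => Matrix.mem_unitaryGroup_iff'.1 (π g).2
  have htr : ∀ g l, (B (σ g l)).trace = (B l).trace := by
    intro g l
    rw [← hσ, Matrix.trace_mul_comm, ← Matrix.mul_assoc, hleft, Matrix.one_mul]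
  have hone : ∀ l, σ 1 l = l := by
    intro l
    have h1 := hσ 1 l
    simp only [map_one, OneMemClass.coe_one, Matrix.one_mul, Matrix.conjTranspose_one,
      Matrix.mul_one] at h1
    have h2 := hB l (σ 1 l)
    rw [← h1, hB] at h2
    by_contra hne
    simp [Ne.symm hne] at h2
  have hcard : Fintype.card (Equiv.Perm (Fin 3)) = 6 := by decide
  have hcomm : ∀ h l, (π h : Matrix (Fin 2) (Fin 2) ℂ) * (∑ g, B (σ g l)) =
      (∑ g, B (σ g l)) * (π h : Matrix (Fin 2) (Fin 2) ℂ) := by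
    intro h l
    have h1 : (π h : Matrix (Fin 2) (Fin 2) ℂ) * (∑ g, B (σ g l)) *
        (π h : Matrix (Fin 2) (Fin 2) ℂ)ᴴ = ∑ g, B (σ g l) := by
      rw [Matrix.mul_sum, Matrix.sum_mul, ← Equiv.sum_comp (Equiv.mulLeft h) (fun g => B (σ g l))]
      refine Finset.sum_congr rfl fun g _ => ?_
      simp only [← hσ, Equiv.coe_mulLeft, map_mul, Submonoid.coe_mul, Matrix.conjTranspose_mul,
        Matrix.mul_assoc]
    conv_rhs => rw [← h1]
    rw [Matrix.mul_assoc _ _ (π h : Matrix (Fin 2) (Fin 2) ℂ), hleft, Matrix.mul_one]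
  have hnc : (π (Equiv.swap 0 1) : Matrix (Fin 2) (Fin 2) ℂ) * (π (Equiv.swap 1 2)) ≠
      (π (Equiv.swap 1 2)) * (π (Equiv.swap 0 1)) := by
    intro h
    have h2 : Equiv.swap (0 : Fin 3) 1 * Equiv.swap 1 2 = Equiv.swap 1 2 * Equiv.swap 0 1 := by
      apply hinj
      apply Subtype.ext
      simpa only [map_mul, Submonoid.coe_mul] using h
    revert h2
    decide
  let N : Fin 4 → Fin 4 → ℕ := fun k l => ∑ g, if k = σ g l then 1 else 0
  have hN : ∀ k l, (N k l : ℂ) = 3 * (B l).trace * star (B k).trace := by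
    intro k l
    obtain ⟨c, hc⟩ := comm_scalar _ _ _ (hcomm (Equiv.swap 0 1) l) (hcomm (Equiv.swap 1 2) l) hnc
    have h1 : (∑ g, B (σ g l)).trace = 6 * (B l).trace := by
      simp [Matrix.trace_sum, htr, Finset.card_univ, hcard]
    have h2 : ((B k)ᴴ * ∑ g, B (σ g l)).trace = N k l := by
      simp [N, Matrix.mul_sum, Matrix.trace_sum, hB]
    rw [hc] at h1 h2
    simp only [Matrix.trace_smul, Matrix.mul_smul, Matrix.mul_one, Matrix.trace_conjTranspose,
      Matrix.trace_one, Fintype.card_fin, smul_eq_mul] at h1 h2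
    rw [← h2]
    push_cast at h1
    linear_combination (star (B k).trace / 2) * h1
  have hpos : ∀ l, N l l ≠ 0 := by
    intro l h
    have := (Finset.sum_eq_zero_iff.1 h) 1 (Finset.mem_univ _)
    simp [hone] at this
  have hb : ∀ l, (B l).trace ≠ 0 := by
    intro l h
    apply hpos l
    have := hN l l
    rw [h] at this
    simpa using this
  have heq : ∀ k, (B k).trace = (B 0).trace := by
    intro k
    have h1 : (N k 0 : ℂ) ≠ 0 := by
      rw [hN]
      exact mul_ne_zero (mul_ne_zero (by norm_num) (hb 0)) (star_ne_zero.2 (hb k))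
    obtain ⟨g, -, hg⟩ := Finset.exists_ne_zero_of_sum_ne_zero (Nat.cast_ne_zero.1 h1)
    have h2 : k = σ g 0 := by
      by_contra h
      simp [h] at hg
    rw [h2, htr]
  have hconst : ∀ k, N k 0 = N 0 0 := by
    intro k
    have : (N k 0 : ℂ) = N 0 0 := by rw [hN, hN, heq k]
    exact_mod_cast this
  have hsum : ∑ k, N k 0 = 6 := by
    simp only [N]
    rw [Finset.sum_comm]
    simp [Finset.card_univ, hcard]
  simp only [hconst, Finset.sum_const, Finset.card_univ, Fintype.card_fin, smul_eq_mul] at hsum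
  omega
end

section
/- Let π : S₃ → U(2) be an injective (faithful) unitary representation of the symmetric group S₃ on ℂ². Then there is no S₃-equivariant unitary error basis for π: there is no family U₁, U₂, U₃, U₄ of unitary 2×2 complex matrices with Tr(U_i† U_j) = 2·δ_{ij} such that for every g ∈ S₃ there exists a permutation σ_g of {1,2,3,4} with π(g) · U_k · π(g)† = U_{σ_g(k)} for all k. Consequently, no tight reference frame–independent teleportation protocol exists for the 2-dimensional irreducible representation of S₃. -/
open Matrix

/-!
Conjugation by `R = π(c)` (`c` a 3-cycle) and by `S = π(s)` (`s` a transposition) permutes an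
equivariant error basis by some `σ`, `τ` with `σ³ = τ² = 1` and `τστ = σ²`. The basis spans all
matrices and `R` is not scalar, so `σ ≠ 1`. Hence `σ` is a 3-cycle on four points; its unique
fixed point `p` is also fixed by `τ`, and the involution `τ` fixes one more point `q`
(`perm_combinatorics`).

Then `U p` commutes with both `R` and `S`, hence is scalar, and so `U q` is traceless by
orthogonality. As `U q` commutes with the traceless non-scalar matrix `S`, it is a multiple
of `S`. Orthogonality of `U q` with `U (σ q) = R (U q) R†` now forces `tr (S R S R†) = tr R = 0`.
By Cayley–Hamilton `R²` is scalar, and `R³ = 1` makes `R` scalar, which is absurd since `R` and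
`S` do not commute.
-/

/-- The centralizer of a non-scalar `2 × 2` matrix `M` is spanned by `1` and `M`. -/
lemma commute_nonscalar (M A : Matrix (Fin 2) (Fin 2) ℂ)
    (hM : ∀ c : ℂ, M ≠ c • 1) (h : A * M = M * A) : ∃ a b : ℂ, A = a • 1 + b • M := by
  have h00 := congrFun (congrFun h 0) 0
  have h01 := congrFun (congrFun h 0) 1
  have h10 := congrFun (congrFun h 1) 0
  simp only [Matrix.mul_apply, Fin.sum_univ_two] at h00 h01 h10
  have key : ∀ b : ℂ, A 0 1 = b * M 0 1 → A 1 0 = b * M 1 0 →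
      A 0 0 - A 1 1 = b * (M 0 0 - M 1 1) → ∃ a b : ℂ, A = a • 1 + b • M := by
    intro b h1 h2 h3
    refine ⟨A 0 0 - b * M 0 0, b, ?_⟩
    ext i j
    fin_cases i <;> fin_cases j <;> simp
    · exact h1
    · exact h2
    · linear_combination -h3
  by_cases m01 : M 0 1 = 0
  · by_cases m10 : M 1 0 = 0
    · by_cases md : M 0 0 - M 1 1 = 0
      · exfalso
        apply hM (M 0 0)
        ext i j
        fin_cases i <;> fin_cases j <;> simp [m01, m10]
        linear_combination -md
      · apply key ((A 0 0 - A 1 1) / (M 0 0 - M 1 1))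
        · field_simp; linear_combination -h01
        · field_simp; linear_combination h10
        · field_simp
    · apply key (A 1 0 / M 1 0)
      · field_simp; linear_combination h00
      · field_simp
      · field_simp; linear_combination -h10
  · apply key (A 0 1 / M 0 1)
    · field_simp
    · field_simp; linear_combination -h00
    · field_simp; linear_combination h01

/-- Cayley–Hamilton for `2 × 2` matrices. -/
lemma cayley_two (M : Matrix (Fin 2) (Fin 2) ℂ) :
    M * M = M.trace • M - M.det • 1 := by
  ext i j
  fin_cases i <;> fin_cases j <;>
    simp [Matrix.mul_apply, Fin.sum_univ_two, Matrix.trace_fin_two, Matrix.det_fin_two] <;> ring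

set_option maxRecDepth 100000 in
set_option maxHeartbeats 4000000 in
lemma perm_combinatorics : ∀ σ : Equiv.Perm (Fin 4), (∀ k, σ (σ (σ k)) = k) → (∃ k, σ k ≠ k) →
    ∀ τ : Equiv.Perm (Fin 4), (∀ k, τ (τ k) = k) → (∀ k, τ (σ (τ k)) = σ (σ k)) →
    ∃ p q, σ p = p ∧ τ p = p ∧ p ≠ q ∧ τ q = q ∧ σ q ≠ q := by
  decide

/-- The relations of `S₃` cannot be realized by non-commuting unitaries `R`, `S` acting by
permutations on a unitary error basis. -/
lemma no_basis (R S : Matrix (Fin 2) (Fin 2) ℂ) (hR : R * Rᴴ = 1) (hS : S * Sᴴ = 1)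
    (hR3 : R * R * R = 1) (hS2 : S * S = 1) (hSRS : S * R * S = R * R)
    (hne : S * R ≠ R * S) (U : Fin 4 → Matrix (Fin 2) (Fin 2) ℂ)
    (hU : ∀ i j, Matrix.trace ((U i)ᴴ * U j) = if i = j then (2 : ℂ) else 0)
    (σ τ : Equiv.Perm (Fin 4)) (hσ : ∀ k, R * U k * Rᴴ = U (σ k))
    (hτ : ∀ k, S * U k * Sᴴ = U (τ k)) : False := by
  have hRc : ∀ c : ℂ, R ≠ c • 1 := by
    rintro c rfl; apply hne; simp
  have hSc : ∀ c : ℂ, S ≠ c • 1 := by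
    rintro c rfl; apply hne; simp
  have hRH : Rᴴ = R * R := by
    calc Rᴴ = R * R * R * Rᴴ := by rw [hR3, one_mul]
      _ = R * R := by rw [mul_assoc, hR, mul_one]
  have hSH : Sᴴ = S := by
    calc Sᴴ = S * S * Sᴴ := by rw [hS2, one_mul]
      _ = S := by rw [mul_assoc, hS, mul_one]
  rw [hRH] at hσ
  rw [hSH] at hτ
  have inj : Function.Injective U := by
    intro i j hij
    by_contra hc
    have h1 := hU i j
    have h2 := hU i i
    rw [← hij, if_neg hc] at h1
    rw [h1] at h2
    simp at h2
  have lin : LinearIndependent ℂ U := by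
    rw [Fintype.linearIndependent_iff]
    intro g hg i
    have h1 : Matrix.trace ((U i)ᴴ * ∑ j, g j • U j) = 0 := by rw [hg]; simp
    simpa [Matrix.mul_sum, Matrix.trace_sum, hU] using h1
  have span : Submodule.span ℂ (Set.range U) = ⊤ := by
    apply lin.span_eq_top_of_card_eq_finrank'
    simp [Module.finrank_matrix]
  have fixR : ∀ k, σ k = k → U k * R = R * U k := by
    intro k hk
    have h1 := hσ k
    rw [hk] at h1
    calc U k * R = R * U k * (R * R) * R := by rw [h1]
      _ = R * U k * (R * R * R) := by simp only [mul_assoc]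
      _ = R * U k := by rw [hR3, mul_one]
  have fixS : ∀ k, τ k = k → U k * S = S * U k := by
    intro k hk
    have h1 := hτ k
    rw [hk] at h1
    calc U k * S = S * U k * S * S := by rw [h1]
      _ = S * U k * (S * S) := by simp only [mul_assoc]
      _ = S * U k := by rw [hS2, mul_one]
  have s3 : ∀ k, σ (σ (σ k)) = k := by
    intro k
    apply inj
    rw [← hσ, ← hσ, ← hσ]
    calc _ = (R * R * R) * U k * ((R * R * R) * (R * R * R)) := by simp only [mul_assoc]
      _ = U k := by rw [hR3]; simp
  have t2 : ∀ k, τ (τ k) = k := by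
    intro k
    apply inj
    rw [← hτ, ← hτ]
    calc _ = (S * S) * U k * (S * S) := by simp only [mul_assoc]
      _ = U k := by rw [hS2]; simp
  have st : ∀ k, τ (σ (τ k)) = σ (σ k) := by
    intro k
    apply inj
    rw [← hτ, ← hσ, ← hτ, ← hσ, ← hσ]
    have e : S * (R * R) * S = (R * R) * (R * R) := by
      calc S * (R * R) * S = S * R * 1 * R * S := by simp only [mul_assoc, one_mul]
        _ = (S * R * S) * (S * R * S) := by rw [← hS2]; simp only [mul_assoc]
        _ = _ := by rw [hSRS]
    calc _ = (S * R * S) * U k * (S * (R * R) * S) := by simp only [mul_assoc]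
      _ = _ := by rw [hSRS, e]; simp only [mul_assoc]
  have sne : ∃ k, σ k ≠ k := by
    by_contra! hc
    have all : ∀ A : Matrix (Fin 2) (Fin 2) ℂ, A * R = R * A := by
      intro A
      have hA : A ∈ Submodule.span ℂ (Set.range U) := by rw [span]; trivial
      induction hA using Submodule.span_induction with
      | mem x hx => obtain ⟨k, rfl⟩ := hx; exact fixR k (hc k)
      | zero => simp
      | add x y _ _ hx hy => rw [add_mul, mul_add, hx, hy]
      | smul a x _ hx => rw [smul_mul_assoc, mul_smul_comm, hx]
    exact hne (all S)
  obtain ⟨p, q, sp, tp, pq, tq, sq⟩ := perm_combinatorics σ s3 sne τ t2 st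
  obtain ⟨a, b, hab⟩ := commute_nonscalar R (U p) hRc (fixR p sp)
  have hb : b = 0 := by
    have h1 := fixS p tp
    rw [hab] at h1
    have h2 : b • (S * R - R * S) = 0 := by
      simp only [add_mul, mul_add, smul_mul_assoc, mul_smul_comm, one_mul, mul_one] at h1
      rw [smul_sub, ← add_left_cancel h1, sub_self]
    rcases smul_eq_zero.mp h2 with h | h
    · exact h
    · exact absurd (sub_eq_zero.mp h) hne
  rw [hb, zero_smul, add_zero] at hab
  have ha : a ≠ 0 := by
    rintro rfl
    have := hU p p
    simp [hab] at this
  have trq : (U q).trace = 0 := by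
    have h1 := hU p q
    rw [if_neg pq, hab] at h1
    simpa [ha] using h1
  have trS : S.trace = 0 := by
    by_contra ht
    have h1 := cayley_two S
    rw [hS2] at h1
    apply hSc (S.trace⁻¹ * (1 + S.det))
    rw [mul_smul, add_smul, one_smul]
    rw [eq_sub_iff_add_eq.mp h1, smul_smul, inv_mul_cancel₀ ht, one_smul]
  obtain ⟨c, d, hcd⟩ := commute_nonscalar S (U q) hSc (fixS q tq)
  have hc : c = 0 := by
    rw [hcd] at trq
    simpa [trS] using trq
  rw [hc, zero_smul, zero_add] at hcd
  have hd : d ≠ 0 := by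
    rintro rfl
    have := hU q q
    simp [hcd] at this
  have trR : R.trace = 0 := by
    have h1 := hU q (σ q)
    rw [if_neg (Ne.symm sq), ← hσ, hcd] at h1
    have e : S * (R * S * (R * R)) = R := by
      calc S * (R * S * (R * R)) = (S * R * S) * (R * R) := by simp only [mul_assoc]
        _ = (R * R * R) * R := by rw [hSRS]; simp only [mul_assoc]
        _ = R := by rw [hR3, one_mul]
    simpa [hSH, e, hd] using h1
  have h1 := cayley_two R
  rw [trR, zero_smul, zero_sub] at h1
  have h2 := hR3
  rw [h1, neg_mul, smul_mul_assoc, one_mul] at h2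
  have hdet : R.det ≠ 0 := by
    intro h
    rw [h] at h2
    simp at h2
  apply hRc (-(R.det)⁻¹)
  rw [← h2, smul_neg, neg_smul, neg_neg, smul_smul, inv_mul_cancel₀ hdet, one_smul]

/-- There is no S₃-equivariant unitary error basis for a faithful unitary representation
of S₃ on ℂ²; hence no tight RFI teleportation protocol exists in this case. -/
theorem stmt_6 (π : Equiv.Perm (Fin 3) →* Matrix.unitaryGroup (Fin 2) ℂ)
    (hinj : Function.Injective π) :
    ¬ ∃ U : Fin 4 → Matrix (Fin 2) (Fin 2) ℂ,
      (∀ k, U k ∈ Matrix.unitaryGroup (Fin 2) ℂ) ∧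
      (∀ i j, Matrix.trace ((U i)ᴴ * U j) = if i = j then (2 : ℂ) else 0) ∧
      (∀ g : Equiv.Perm (Fin 3), ∃ σ : Equiv.Perm (Fin 4), ∀ k,
        (π g : Matrix (Fin 2) (Fin 2) ℂ) * U k * (π g : Matrix (Fin 2) (Fin 2) ℂ)ᴴ =
          U (σ k)) := by
  rintro ⟨U, -, hU, hG⟩
  let r : Equiv.Perm (Fin 3) := finRotate 3
  let s : Equiv.Perm (Fin 3) := Equiv.swap 0 1
  obtain ⟨σ, hσ⟩ := hG r
  obtain ⟨τ, hτ⟩ := hG s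
  have hr3 : r * r * r = 1 := by decide
  have hs2 : s * s = 1 := by decide
  have hsrs : s * r * s = r * r := by decide
  have hne : s * r ≠ r * s := by decide
  have unit : ∀ g, (π g : Matrix (Fin 2) (Fin 2) ℂ) * (π g : Matrix (Fin 2) (Fin 2) ℂ)ᴴ = 1 :=
    fun g => Matrix.mem_unitaryGroup_iff.mp (π g).2
  have coe_mul : ∀ g h, ((π (g * h) : Matrix.unitaryGroup (Fin 2) ℂ) :
      Matrix (Fin 2) (Fin 2) ℂ) = π g * π h := by
    intro g h; rw [map_mul]; rfl
  have coe_one : ((π 1 : Matrix.unitaryGroup (Fin 2) ℂ) : Matrix (Fin 2) (Fin 2) ℂ) = 1 := by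
    rw [map_one]; rfl
  refine no_basis (π r) (π s) (unit r) (unit s) ?_ ?_ ?_ ?_ U hU σ τ hσ hτ
  · rw [← coe_mul, ← coe_mul, hr3, coe_one]
  · rw [← coe_mul, hs2, coe_one]
  · rw [← coe_mul, ← coe_mul, ← coe_mul, hsrs]
  · rw [← coe_mul, ← coe_mul]
    exact fun h => hne (hinj (Subtype.ext h))
end

section
/- Let G be a group, let 1 ≤ n ≤ 4, and let π : G → U(n) be a unitary representation of G on ℂⁿ that admits a G-equivariant orthonormal basis (an orthonormal basis v₁,…,v_n of ℂⁿ such that for every g ∈ G there is a permutation σ_g ∈ S_n with π(g) v_i = v_{σ_g(i)}). Then there exists a G-equivariant unitary error basis for π: a family of n² unitary n×n matrices (U_k) with Tr(U_i† U_j) = n·δ_{ij} such that for every g ∈ G there is a permutation τ_g of the index set with π(g) · U_k · π(g)† = U_{τ_g(k)} for all k. -/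
/-!
In the given orthonormal basis every `π g` is a permutation matrix, so it suffices to find a
unitary error basis which is permuted under conjugation by all of `S_n`. It is of
shift-and-multiply type: its elements are `P_k D_i` for `k, i : Fin n`, where

* `P_k` runs over a sharply transitive family of `n` permutations closed under conjugation by `S_n`
  (a Latin square): `S_1`, `S_2`, the transpositions in `S_3`, the Klein four-group in `S_4`
  (`exists_latin`);
* `D_i` is diagonal with entry `c` in position `i` and `1` elsewhere, where `|c| = 1` and
  `Re c = 1 - n / 2`. This choice of `c` makes distinct `D_i` orthogonal (`sum_diagVec`), and such a
  `c` exists exactly because `n ≤ 4` (`exists_phase`).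

Conjugation by the matrix of `σ` sends `P_k D_i` to `P_l D_{σ i}`, where `P_l = σ P_k σ⁻¹`.
-/

open Matrix

/-- The monomial matrix sending the basis vector `e_y` to `d y • e_{p y}`. -/
def monomialMat {n : ℕ} (p : Equiv.Perm (Fin n)) (d : Fin n → ℂ) : Matrix (Fin n) (Fin n) ℂ :=
  Matrix.of fun x y => if x = p y then d y else 0

/-- The vector with entry `c` at `i` and `1` elsewhere. -/
def diagVec {n : ℕ} (c : ℂ) (i : Fin n) : Fin n → ℂ := fun y => if y = i then c else 1

lemma monomialMat_mul {n : ℕ} (p q : Equiv.Perm (Fin n)) (d e : Fin n → ℂ) :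
    monomialMat p d * monomialMat q e = monomialMat (p * q) (fun y => d (q y) * e y) := by
  ext x y
  simp [monomialMat, Matrix.mul_apply]
  exact if_congr Iff.rfl rfl rfl

lemma monomialMat_conjTranspose {n : ℕ} (p : Equiv.Perm (Fin n)) (d : Fin n → ℂ) :
    (monomialMat p d)ᴴ = monomialMat p⁻¹ (fun y => star (d (p⁻¹ y))) := by
  ext x y
  simp only [monomialMat, Matrix.conjTranspose_apply, Matrix.of_apply]
  by_cases h : y = p x
  · subst h
    simp
  · have h' : x ≠ p⁻¹ y := by
      rintro rfl
      simp at h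
    rw [if_neg h, if_neg h', star_zero]

lemma monomialMat_one {n : ℕ} : monomialMat (1 : Equiv.Perm (Fin n)) (fun _ => 1) = 1 := by
  ext x y
  simp [monomialMat, Matrix.one_apply]
  exact if_congr Iff.rfl rfl rfl

lemma trace_monomialMat {n : ℕ} (p : Equiv.Perm (Fin n)) (d : Fin n → ℂ) :
    (monomialMat p d).trace = ∑ y, if y = p y then d y else 0 := by
  simp [monomialMat, Matrix.trace]

lemma exists_latin (n : ℕ) (hn1 : 1 ≤ n) (hn4 : n ≤ 4) :
    ∃ p : Fin n → Equiv.Perm (Fin n), (∀ k l x, p k x = p l x → k = l) ∧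
      ∀ σ : Equiv.Perm (Fin n), ∀ k, ∃ l, ∀ x, σ (p k x) = p l (σ x) := by
  interval_cases n
  · exact ⟨fun _ => 1, by decide, by decide⟩
  · exact ⟨fun k => Equiv.addRight k, by decide, by decide⟩
  · -- the reflections `x ↦ k - x` of `ℤ/3`, which are the three transpositions
    exact ⟨fun k => Equiv.subLeft k, by decide, by decide⟩
  · -- the translations of `𝔽₂²`, with bitwise exclusive or as addition
    refine ⟨fun k => ⟨fun x => k ^^^ x, fun x => k ^^^ x, by revert k; decide,
      by revert k; decide⟩, by decide, ?_⟩
    set_option maxRecDepth 100000 in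
    decide

lemma exists_phase (n : ℕ) (hn4 : n ≤ 4) :
    ∃ c : ℂ, star c * c = 1 ∧ star c + c = 2 - n := by
  have h : (n : ℝ) ≤ 4 := by exact_mod_cast hn4
  have h0 : (0 : ℝ) ≤ n := n.cast_nonneg
  have hs : Real.sqrt (1 - (1 - n / 2 : ℝ) ^ 2) ^ 2 = 1 - (1 - n / 2 : ℝ) ^ 2 :=
    Real.sq_sqrt (by nlinarith)
  refine ⟨⟨1 - n / 2, Real.sqrt (1 - (1 - n / 2 : ℝ) ^ 2)⟩, ?_, ?_⟩
  · apply Complex.ext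
    · simp
      nlinarith
    · simp
      ring
  · apply Complex.ext
    · simp
      ring
    · simp

lemma star_diagVec_mul {n : ℕ} {c : ℂ} (hc : star c * c = 1) (i y : Fin n) :
    star (diagVec c i y) * diagVec c i y = 1 := by
  unfold diagVec
  split_ifs
  · exact hc
  · simp

lemma sum_diagVec {n : ℕ} {c : ℂ} (hc : star c * c = 1) (hc2 : star c + c = 2 - n)
    (i j : Fin n) :
    ∑ y, star (diagVec c i y) * diagVec c j y = if i = j then (n : ℂ) else 0 := by
  split_ifs with h
  · subst h
    simp only [star_diagVec_mul hc]
    simp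
  · have h1 : ∀ y, star (diagVec c i y) * diagVec c j y =
        1 + (if y = i then star c - 1 else 0) + (if y = j then c - 1 else 0) := by
      intro y
      unfold diagVec
      by_cases hi : y = i
      · subst hi
        simp [h]
      · by_cases hj : y = j
        · subst hj
          simp [hi]
        · simp [hi, hj]
    simp only [h1, Finset.sum_add_distrib, Finset.sum_ite_eq', Finset.mem_univ, if_true]
    simp only [Finset.sum_const, Finset.card_univ, Fintype.card_fin, nsmul_eq_mul, mul_one]
    linear_combination hc2

lemma diagVec_perm {n : ℕ} (c : ℂ) (σ : Equiv.Perm (Fin n)) (i y : Fin n) :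
    diagVec c (σ i) (σ y) = diagVec c i y := by
  simp [diagVec]

/-- Orthogonality of the family `P_k D_i`: for `k ≠ l` the matrix `P_k† P_l` has zero diagonal, and
for `k = l` the trace reduces to the inner product of the diagonals. -/
lemma trace_basis {n : ℕ} {c : ℂ} (hc : star c * c = 1) (hc2 : star c + c = 2 - n)
    {p : Fin n → Equiv.Perm (Fin n)} (hp : ∀ k l x, p k x = p l x → k = l) (k l i j : Fin n) :
    ((monomialMat (p k) (diagVec c i))ᴴ * monomialMat (p l) (diagVec c j)).trace =
      if k = l ∧ i = j then (n : ℂ) else 0 := by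
  rw [monomialMat_conjTranspose, monomialMat_mul, trace_monomialMat]
  by_cases h : k = l
  · subst h
    simpa using sum_diagVec hc hc2 i j
  · rw [if_neg (fun h' => h h'.1)]
    refine Finset.sum_eq_zero fun y _ => if_neg fun hy => h (hp k l y ?_)
    rw [Equiv.Perm.mul_apply, Equiv.Perm.eq_inv_iff_eq] at hy
    exact hy

/-- For systems of dimension at most 4, a representation admitting a G-equivariant
orthonormal basis admits a G-equivariant unitary error basis, i.e. a tight RFI
teleportation protocol exists. -/
theorem stmt_14 (G : Type*) [Group G] (n : ℕ) (hn1 : 1 ≤ n) (hn4 : n ≤ 4)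
    (π : G →* Matrix.unitaryGroup (Fin n) ℂ)
    (v : Fin n → (Fin n → ℂ))
    (hortho : ∀ i j, ∑ k, star (v i k) * v j k = if i = j then (1 : ℂ) else 0)
    (hequiv : ∀ g : G, ∃ σ : Equiv.Perm (Fin n), ∀ i,
      (π g : Matrix (Fin n) (Fin n) ℂ) *ᵥ v i = v (σ i)) :
    ∃ U : Fin (n ^ 2) → Matrix (Fin n) (Fin n) ℂ,
      (∀ k, U k ∈ Matrix.unitaryGroup (Fin n) ℂ) ∧
      (∀ i j, Matrix.trace ((U i)ᴴ * U j) = if i = j then (n : ℂ) else 0) ∧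
      (∀ g : G, ∃ τ : Equiv.Perm (Fin (n ^ 2)), ∀ k,
        (π g : Matrix (Fin n) (Fin n) ℂ) * U k * (π g : Matrix (Fin n) (Fin n) ℂ)ᴴ =
          U (τ k)) := by
  obtain ⟨p, hp, hconj⟩ := exists_latin n hn1 hn4
  obtain ⟨c, hc, hc2⟩ := exists_phase n hn4
  let e : Fin (n ^ 2) ≃ Fin n × Fin n := (finCongr (pow_two n)).trans finProdFinEquiv.symm
  -- the change-of-basis matrix, with columns `v i`
  let V : Matrix (Fin n) (Fin n) ℂ := Matrix.of fun x i => v i x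
  have hV : Vᴴ * V = 1 := by
    ext i j
    simpa [V, Matrix.mul_apply, Matrix.one_apply] using hortho i j
  have hV' : V * Vᴴ = 1 := mul_eq_one_comm.mp hV
  let B : Fin n × Fin n → Matrix (Fin n) (Fin n) ℂ := fun a =>
    monomialMat (p a.1) (diagVec c a.2)
  have hB : ∀ a, (B a)ᴴ * B a = 1 := by
    intro a
    simp only [B]
    rw [monomialMat_conjTranspose, monomialMat_mul, ← monomialMat_one]
    have hinv : ∀ y, (p a.1)⁻¹ (p a.1 y) = y := (p a.1).symm_apply_apply
    simp only [hinv, inv_mul_cancel, star_diagVec_mul hc]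
  have hprod : ∀ a b, (V * B a * Vᴴ)ᴴ * (V * B b * Vᴴ) = V * ((B a)ᴴ * B b) * Vᴴ := by
    intro a b
    simp only [Matrix.conjTranspose_mul, Matrix.conjTranspose_conjTranspose]
    calc _ = V * ((B a)ᴴ * ((Vᴴ * V) * B b)) * Vᴴ := by simp only [Matrix.mul_assoc]
      _ = _ := by rw [hV, Matrix.one_mul]
  refine ⟨fun k => V * B (e k) * Vᴴ, ?_, ?_, ?_⟩
  · intro k
    rw [Matrix.mem_unitaryGroup_iff', Matrix.star_eq_conjTranspose, hprod, hB, Matrix.mul_one, hV']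
  · intro i j
    rw [hprod, Matrix.trace_mul_comm, ← Matrix.mul_assoc, hV, Matrix.one_mul]
    simp only [B]
    rw [trace_basis hc hc2 hp]
    simp only [← Prod.ext_iff, e.injective.eq_iff]
  · intro g
    obtain ⟨σ, hσ⟩ := hequiv g
    choose l hl using hconj σ
    have hlinj : Function.Injective l := by
      intro k k' h
      refine hp k k' ⟨0, hn1⟩ (σ.injective ?_)
      rw [hl, hl, h]
    let t : Equiv.Perm (Fin n) :=
      Equiv.ofBijective l (Finite.injective_iff_bijective.mp hlinj)
    have hπ : (π g : Matrix (Fin n) (Fin n) ℂ) * V = V * monomialMat σ (fun _ => 1) := by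
      ext x i
      have := congrFun (hσ i) x
      simpa [V, monomialMat, Matrix.mul_apply, Matrix.mulVec, dotProduct] using this
    refine ⟨(e.trans (t.prodCongr σ)).trans e.symm, fun k => ?_⟩
    have hσB : monomialMat σ (fun _ => 1) * B (e k) =
        B (t (e k).1, σ (e k).2) * monomialMat σ (fun _ => 1) := by
      simp only [B]
      rw [monomialMat_mul, monomialMat_mul]
      congr 1
      · ext1 x
        simpa [t] using hl (e k).1 x
      · funext y
        simp [diagVec_perm]
    have hσ1 : monomialMat σ (fun _ => 1) * (monomialMat σ (fun _ => 1))ᴴ = 1 := by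
      rw [monomialMat_conjTranspose, monomialMat_mul, ← monomialMat_one]
      simp
    have hτ : e (((e.trans (t.prodCongr σ)).trans e.symm) k) = (t (e k).1, σ (e k).2) := by
      simp [Prod.map]
    simp only [hτ]
    calc _ = ((π g : Matrix (Fin n) (Fin n) ℂ) * V) * B (e k) *
          ((π g : Matrix (Fin n) (Fin n) ℂ) * V)ᴴ := by
            simp only [Matrix.conjTranspose_mul, Matrix.mul_assoc]
      _ = V * (monomialMat σ (fun _ => 1) * B (e k)) * (monomialMat σ (fun _ => 1))ᴴ * Vᴴ := by
            rw [hπ]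
            simp only [Matrix.conjTranspose_mul, Matrix.mul_assoc]
      _ = V * B (t (e k).1, σ (e k).2) *
            (monomialMat σ (fun _ => 1) * (monomialMat σ (fun _ => 1))ᴴ) * Vᴴ := by
            rw [hσB]
            simp only [Matrix.mul_assoc]
      _ = _ := by rw [hσ1, Matrix.mul_one]
end

section
/- Let A be the 2×2 real symmetric unitary matrix A = [[√3/2, 1/2], [1/2, −√3/2]], and define U₀ = (1/√2)·[[1, 1], [−1, 1]], U₁ = (1/√2)·[[1, −1], [1, 1]], U₂ = (1/4)·[[−√2−√6, −√2+√6], [−√2+√6, √2+√6]], U₃ = (1/4)·[[√2−√6, −√2−√6], [−√2−√6, −√2+√6]], viewed as 2×2 complex matrices. Then (U₀, U₁, U₂, U₃) is a unitary error basis on ℂ² (each U_k is unitary and Tr(U_i† U_j) = 2·δ_{ij}), and conjugation by A swaps its elements in pairs: A† · U₀ · A = U₁, A† · U₁ · A = U₀, A† · U₂ · A = U₃, and A† · U₃ · A = U₂. In particular this unitary error basis is ℤ₂-equivariant for the representation of ℤ₂ sending the nontrivial element to A. -/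
/-!
Every matrix here is real with entries in `ℚ(√2, √3)`, so once `√6 = √2 √3` and `1/√2 = √2/2` are
substituted, each claim is a polynomial identity modulo `a² = 2`, `b² = 3` for `a = √2`, `b = √3`.

Conceptually, `U₀` and `U₁` are `(I ± J)/√2` with `J` the rotation by a right angle, and `A` is a
reflection, so conjugation by `A` sends `J` to `-J`. `A`, `U₂` and `U₃` are the symmetric reflections
`R(θ) = [[cos θ, sin θ], [sin θ, -cos θ]]` for `θ = 30°, 165°, -105°`, and
`R(α) R(θ) R(α) = R(2α - θ)`. Orthogonality holds because the symmetric traceless matrices are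
orthogonal to `I` and `J`, the angles of `U₂` and `U₃` differ by `270°`, and `U₀ᵀ U₁ = -J` is
traceless.
-/

open Matrix

open Real in
/-- The matrix A = [[√3/2, 1/2],[1/2,−√3/2]] of the ℤ₂ reference-frame action. -/
noncomputable def A16 : Matrix (Fin 2) (Fin 2) ℂ :=
  !![((Real.sqrt 3 / 2 : ℝ) : ℂ), ((1 / 2 : ℝ) : ℂ);
     ((1 / 2 : ℝ) : ℂ), ((-(Real.sqrt 3) / 2 : ℝ) : ℂ)]

/-- The four unitaries U₀, U₁, U₂, U₃ of the ℤ₂-equivariant unitary error basis. -/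
noncomputable def U16 : Fin 4 → Matrix (Fin 2) (Fin 2) ℂ :=
  ![((1 / (Real.sqrt 2 : ℝ) : ℝ) : ℂ) • !![(1 : ℂ), 1; -1, 1],
    ((1 / (Real.sqrt 2 : ℝ) : ℝ) : ℂ) • !![(1 : ℂ), -1; 1, 1],
    ((1 / 4 : ℝ) : ℂ) •
      !![((-(Real.sqrt 2) - Real.sqrt 6 : ℝ) : ℂ), ((-(Real.sqrt 2) + Real.sqrt 6 : ℝ) : ℂ);
         ((-(Real.sqrt 2) + Real.sqrt 6 : ℝ) : ℂ), ((Real.sqrt 2 + Real.sqrt 6 : ℝ) : ℂ)],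
    ((1 / 4 : ℝ) : ℂ) •
      !![((Real.sqrt 2 - Real.sqrt 6 : ℝ) : ℂ), ((-(Real.sqrt 2) - Real.sqrt 6 : ℝ) : ℂ);
         ((-(Real.sqrt 2) - Real.sqrt 6 : ℝ) : ℂ), ((-(Real.sqrt 2) + Real.sqrt 6 : ℝ) : ℂ)]]

/-- `A` and the `U k` in terms of complex numbers `a`, `b` standing for `√2`, `√3`; both are fixed by
conjugation, being real. -/
lemma exists_sqrt_form : ∃ a b : ℂ, a ^ 2 = 2 ∧ b ^ 2 = 3 ∧
    (starRingEnd ℂ) a = a ∧ (starRingEnd ℂ) b = b ∧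
    A16 = !![b / 2, 1 / 2; 1 / 2, -b / 2] ∧
    U16 = ![!![a / 2, a / 2; -a / 2, a / 2],
      !![a / 2, -a / 2; a / 2, a / 2],
      !![(-a - a * b) / 4, (-a + a * b) / 4; (-a + a * b) / 4, (a + a * b) / 4],
      !![(a - a * b) / 4, (-a - a * b) / 4; (-a - a * b) / 4, (-a + a * b) / 4]] := by
  have h6 : Real.sqrt 6 = Real.sqrt 2 * Real.sqrt 3 := by
    rw [← Real.sqrt_mul (by norm_num)]; norm_num
  have h2 : 1 / Real.sqrt 2 = Real.sqrt 2 / 2 := by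
    rw [Real.sqrt_div_self']
  refine ⟨(Real.sqrt 2 : ℝ), (Real.sqrt 3 : ℝ), ?_, ?_, Complex.conj_ofReal _,
    Complex.conj_ofReal _, ?_, ?_⟩
  · rw [← Complex.ofReal_pow, Real.sq_sqrt (by norm_num)]; norm_num
  · rw [← Complex.ofReal_pow, Real.sq_sqrt (by norm_num)]; norm_num
  · simp [A16]
  · unfold U16
    rw [h6, h2]
    ext k i j
    fin_cases k <;> fin_cases i <;> fin_cases j <;> simp <;> ring

/-- (U₀, U₁, U₂, U₃) is a unitary error basis on ℂ², A is unitary, and conjugation by A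
swaps the basis elements in pairs — so the basis is ℤ₂-equivariant for the representation
sending the nontrivial element to A. -/
theorem stmt_16 :
    A16 ∈ Matrix.unitaryGroup (Fin 2) ℂ ∧
    (∀ k, U16 k ∈ Matrix.unitaryGroup (Fin 2) ℂ) ∧
    (∀ i j, Matrix.trace ((U16 i)ᴴ * U16 j) = if i = j then (2 : ℂ) else 0) ∧
    A16ᴴ * U16 0 * A16 = U16 1 ∧
    A16ᴴ * U16 1 * A16 = U16 0 ∧
    A16ᴴ * U16 2 * A16 = U16 3 ∧
    A16ᴴ * U16 3 * A16 = U16 2 := by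
  obtain ⟨a, b, ha, hb, sa, sb, hA, hU⟩ := exists_sqrt_form
  rw [hA, hU]
  have s4 : (starRingEnd ℂ) 4 = 4 := map_ofNat _ 4
  refine ⟨?_, ?_, ?_, ?_, ?_, ?_, ?_⟩
  · rw [Matrix.mem_unitaryGroup_iff]
    ext i j
    fin_cases i <;> fin_cases j <;>
      simp [Matrix.mul_apply, Matrix.star_apply, Fin.sum_univ_two, sb] <;> grind
  · intro k
    rw [Matrix.mem_unitaryGroup_iff]
    ext i j
    fin_cases k <;> fin_cases i <;> fin_cases j <;>
      simp [Matrix.mul_apply, Matrix.star_apply, Fin.sum_univ_two, sa, sb, s4] <;> grind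
  · intro i j
    fin_cases i <;> fin_cases j <;>
      simp [Matrix.trace, Matrix.mul_apply, Fin.sum_univ_two, sa, sb, s4] <;> grind
  all_goals
    ext i j
    fin_cases i <;> fin_cases j <;>
      simp [Matrix.mul_apply, Fin.sum_univ_two, sb] <;> grind
end
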